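/- Let n ≥ 3, let φ : H_n → H_n be an injective group homomorphism, and let i ≠ j in {2,…,n}. If O is an infinite orbit of φ(g_i), then all points of O moved by φ(g_j) lie in a single orbit of φ(g_j); that is, there is one orbit O' of φ(g_j) with O ∩ supp(φ(g_j)) ⊆ O'. -/

import Mathlib

/-! ## Houghton's groups: basic setup -/

/-- The underlying set of Houghton's group: `n` rays of discrete points;
`(i, p)` is the point at position `p` on the ray `R_i`. -/
abbrev XH (n : ℕ) : Type := Fin n × ℕ

/-- `g` acts, outside a finite set, as the translation by `m i` on the ray `R_i`. -/
def HasTranslationVector {n : ℕ} (g : Equiv.Perm (XH n)) (m : Fin n → ℤ) : Prop :=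
  ∃ K : Finset (XH n), ∀ x : XH n, x ∉ K →
    (g x).1 = x.1 ∧ ((g x).2 : ℤ) = (x.2 : ℤ) + m x.1

/-- An eventual translation of `X_n`. -/
def IsEventualTranslation {n : ℕ} (g : Equiv.Perm (XH n)) : Prop :=
  ∃ m : Fin n → ℤ, HasTranslationVector g m

/-- Houghton's group `H_n`: the group of all eventual translations of `X_n`. -/
def Houghton (n : ℕ) : Subgroup (Equiv.Perm (XH n)) where
  carrier := {g | IsEventualTranslation g}
  one_mem' := ⟨0, ∅, fun x _ => by simp⟩
  mul_mem' := by
    rintro a b ⟨ma, Ka, hKa⟩ ⟨mb, Kb, hKb⟩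
    classical
    refine ⟨ma + mb, Kb ∪ Kb.image b ∪ Ka.image b.symm, fun x hx => ?_⟩
    simp only [Finset.mem_union, not_or] at hx
    have hxb : x ∉ Kb := hx.1.1
    have hbx : b x ∉ Ka := by
      intro hc
      exact hx.2 (Finset.mem_image.mpr ⟨b x, hc, b.symm_apply_apply x⟩)
    obtain ⟨hb1, hb2⟩ := hKb x hxb
    obtain ⟨ha1, ha2⟩ := hKa (b x) hbx
    refine ⟨?_, ?_⟩
    · show (a (b x)).1 = x.1
      rw [ha1, hb1]
    · show ((a (b x)).2 : ℤ) = (x.2 : ℤ) + (ma + mb) x.1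
      rw [ha2, hb1, hb2, Pi.add_apply]
      ring
  inv_mem' := by
    rintro a ⟨m, K, hK⟩
    classical
    refine ⟨-m, K.image a, fun x hx => ?_⟩
    have hy : a⁻¹ x ∉ K := by
      intro hc
      exact hx (Finset.mem_image.mpr ⟨a⁻¹ x, hc, a.apply_symm_apply x⟩)
    obtain ⟨e1, e2⟩ := hK _ hy
    rw [show a (a⁻¹ x) = x from a.apply_symm_apply x] at e1 e2
    refine ⟨e1.symm, ?_⟩
    rw [← e1] at e2
    rw [Pi.neg_apply]
    omega

/-- The subgroup of finitely supported permutations of `X_n`. -/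
def FSymSub (n : ℕ) : Subgroup (Equiv.Perm (XH n)) where
  carrier := {g | {x | g x ≠ x}.Finite}
  one_mem' := by simp
  mul_mem' := by
    intro a b ha hb
    apply Set.Finite.subset (ha.union hb)
    intro x hx
    by_cases h : b x = x
    · left
      show a x ≠ x
      simpa [Equiv.Perm.mul_apply, h] using hx
    · right; exact h
  inv_mem' := by
    intro a ha
    apply Set.Finite.subset ha
    intro x hx
    show a x ≠ x
    intro hc
    apply hx
    show a⁻¹ x = x
    conv_lhs => rw [← hc]
    exact a.symm_apply_apply x

/-- The subgroup of finitely supported even permutations of `X_n`: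
products of an even number of transpositions. -/
def FAltSub (n : ℕ) : Subgroup (Equiv.Perm (XH n)) where
  carrier := {g | ∃ l : List (Equiv.Perm (XH n)),
    (∀ τ ∈ l, τ.IsSwap) ∧ Even l.length ∧ l.prod = g}
  one_mem' := ⟨[], by simp, by simp, by simp⟩
  mul_mem' := by
    rintro a b ⟨la, hla, hea, rfl⟩ ⟨lb, hlb, heb, rfl⟩
    refine ⟨la ++ lb, ?_, ?_, List.prod_append⟩
    · intro τ hτ
      rcases List.mem_append.mp hτ with h | h
      exacts [hla τ h, hlb τ h]
    · simpa using hea.add heb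
  inv_mem' := by
    rintro a ⟨l, hl, he, rfl⟩
    refine ⟨(l.map fun x => x⁻¹).reverse, ?_, by simpa using he,
      (List.prod_inv_reverse l).symm⟩
    intro τ hτ
    rw [List.mem_reverse, List.mem_map] at hτ
    obtain ⟨σ, hσ, rfl⟩ := hτ
    obtain ⟨x, y, hxy, rfl⟩ := hl σ hσ
    exact ⟨x, y, hxy, by rw [Equiv.swap_inv]⟩

/-- `FSym_n` and `FAlt_n` viewed as subgroups of `H_n`. -/
def FSymIn (n : ℕ) : Subgroup (Houghton n) := (FSymSub n).comap (Houghton n).subtype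

def FAltIn (n : ℕ) : Subgroup (Houghton n) := (FAltSub n).comap (Houghton n).subtype

/-- The index of the first ray `R_1`. -/
def ray0 (n : ℕ) (hn : 0 < n) : Fin n := ⟨0, hn⟩

/-- The underlying function of the generator `g_i`. -/
def gFun (n : ℕ) (hn : 0 < n) (i : Fin n) : XH n → XH n := fun x =>
  if x.1 = ray0 n hn then (if x.2 = 0 then (i, 0) else (ray0 n hn, x.2 - 1))
  else if x.1 = i then (i, x.2 + 1) else x

/-- The inverse of `gFun`. -/
def gInvFun (n : ℕ) (hn : 0 < n) (i : Fin n) : XH n → XH n := fun x =>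
  if x.1 = i then (if x.2 = 0 then (ray0 n hn, 0) else (i, x.2 - 1))
  else if x.1 = ray0 n hn then (ray0 n hn, x.2 + 1) else x

/-- The generator `g_i` of `H_n` (as a permutation): it translates the first ray
down by one, sends `(1,1)` to `(i,1)` and translates the ray `R_i` up by one. -/
def gGen (n : ℕ) (hn : 0 < n) (i : Fin n) (hi : i ≠ ray0 n hn) : Equiv.Perm (XH n) where
  toFun := gFun n hn i
  invFun := gInvFun n hn i
  left_inv := by
    rintro ⟨j, p⟩
    show gInvFun n hn i (gFun n hn i (j, p)) = (j, p)
    simp only [gFun, gInvFun]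
    split_ifs <;> simp_all [Prod.ext_iff] <;> omega
  right_inv := by
    rintro ⟨j, p⟩
    show gFun n hn i (gInvFun n hn i (j, p)) = (j, p)
    simp only [gFun, gInvFun]
    split_ifs <;> simp_all [Prod.ext_iff] <;> omega

/-- The translation vector of `g_i`. -/
def gVec (n : ℕ) (hn : 0 < n) (i : Fin n) : Fin n → ℤ :=
  fun j => if j = ray0 n hn then -1 else if j = i then 1 else 0

theorem gGen_mem (n : ℕ) (hn : 0 < n) (i : Fin n) (hi : i ≠ ray0 n hn) :
    gGen n hn i hi ∈ Houghton n := by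
  refine ⟨gVec n hn i, {(ray0 n hn, 0)}, ?_⟩
  rintro ⟨j, p⟩ hx
  rw [Finset.mem_singleton] at hx
  have hx' : j ≠ ray0 n hn ∨ p ≠ 0 := by
    by_contra h
    push_neg at h
    exact hx (by rw [h.1, h.2])
  show (gFun n hn i (j, p)).1 = j ∧ ((gFun n hn i (j, p)).2 : ℤ) = (p : ℤ) + gVec n hn i j
  simp only [gFun, gVec]
  split_ifs <;> simp_all [Prod.ext_iff] <;> omega

/-- The generator `g_i` as an element of `H_n`. -/
def hGen (n : ℕ) (hn : 0 < n) (i : Fin n) (hi : i ≠ ray0 n hn) : Houghton n :=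
  ⟨gGen n hn i hi, gGen_mem n hn i hi⟩

/-- The transposition `α` exchanging `(1,1)` and `(1,2)`. -/
def alphaPerm (n : ℕ) (hn : 0 < n) : Equiv.Perm (XH n) :=
  Equiv.swap (ray0 n hn, 0) (ray0 n hn, 1)

theorem alphaPerm_mem (n : ℕ) (hn : 0 < n) : alphaPerm n hn ∈ Houghton n := by
  refine ⟨0, {(ray0 n hn, 0), (ray0 n hn, 1)}, ?_⟩
  intro x hx
  simp only [Finset.mem_insert, Finset.mem_singleton, not_or] at hx
  rw [show alphaPerm n hn x = x from Equiv.swap_apply_of_ne_of_ne hx.1 hx.2]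
  simp

/-- `α` as an element of `H_n`. -/
def hAlpha (n : ℕ) (hn : 0 < n) : Houghton n := ⟨alphaPerm n hn, alphaPerm_mem n hn⟩

theorem alphaPerm_mem_FSym (n : ℕ) (hn : 0 < n) : alphaPerm n hn ∈ FSymSub n := by
  show {x | alphaPerm n hn x ≠ x}.Finite
  apply Set.Finite.subset ((Set.finite_singleton (ray0 n hn, 1)).insert (ray0 n hn, 0))
  intro x hx
  by_contra hc
  simp only [Set.mem_insert_iff, Set.mem_singleton_iff, not_or] at hc
  exact hx (Equiv.swap_apply_of_ne_of_ne hc.1 hc.2)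

theorem swap_mem_houghton {n : ℕ} (P Q : XH n) : Equiv.swap P Q ∈ Houghton n := by
  classical
  refine ⟨0, {P, Q}, ?_⟩
  intro x hx
  simp only [Finset.mem_insert, Finset.mem_singleton, not_or] at hx
  rw [Equiv.swap_apply_of_ne_of_ne hx.1 hx.2]
  simp

/-- The transposition exchanging two points, as an element of `H_n`. -/
def hSwap {n : ℕ} (P Q : XH n) : Houghton n := ⟨Equiv.swap P Q, swap_mem_houghton P Q⟩

/-- The set of generators `{g_2, …, g_n}` of `H_n`. -/
def houghtonGensOnly (n : ℕ) (hn : 0 < n) : Set (Houghton n) :=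
  {x | ∃ (i : Fin n) (hi : i ≠ ray0 n hn), x = hGen n hn i hi}

/-- The chosen generating set of `H_n`: `{g_2, …, g_n}` for `n ≠ 2`,
and `{g_2, α}` for `n = 2`. -/
def houghtonGenSet (n : ℕ) (hn : 0 < n) : Set (Houghton n) :=
  if n = 2 then houghtonGensOnly n hn ∪ {hAlpha n hn} else houghtonGensOnly n hn

/-- Word length with respect to a set of generators (and their inverses). -/
noncomputable def wordLength {G : Type*} [Group G] (S : Set G) (g : G) : ℕ :=
  sInf {k | ∃ l : List G, (∀ x ∈ l, x ∈ S ∨ x⁻¹ ∈ S) ∧ l.length = k ∧ l.prod = g}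

/-- The growth rate of an endomorphism `φ`:
`GR(φ) = sup_g limsup_k |φ^k(g)|^{1/k}`. -/
noncomputable def growthRate {G : Type*} [Group G] (S : Set G) (φ : G →* G) : ℝ :=
  ⨆ g : G, Filter.limsup
    (fun k : ℕ => (wordLength S ((⇑φ)^[k] g) : ℝ) ^ (1 / (k : ℝ))) Filter.atTop

/-- The orbit of `x` under the permutation `h`. -/
def permOrbit {α : Type*} (h : Equiv.Perm α) (x : α) : Set α :=
  Set.range (fun k : ℤ => (h ^ k) x)

/-- `x` has infinite orbit under `h` (`x` is an essential point of `h`). -/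
def InfiniteOrbit {α : Type*} (h : Equiv.Perm α) (x : α) : Prop :=
  (permOrbit h x).Infinite

/-- The image `φ(g_i)` as a permutation of `X_n`. -/
def imageGen {n : ℕ} (h0 : 0 < n) (φ : Houghton n →* Houghton n)
    (i : Fin n) (hi : i ≠ ray0 n h0) : Equiv.Perm (XH n) :=
  ↑(φ (hGen n h0 i hi))

/-- The image `φ(α)` as a permutation of `X_n`. -/
def imageAlpha {n : ℕ} (h0 : 0 < n) (φ : Houghton n →* Houghton n) : Equiv.Perm (XH n) :=
  ↑(φ (hAlpha n h0))

/-- A transposition-orbit of an involution: a pair `{x, h x}` with `h x ≠ x`. -/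
def TOrbit {Ω : Type*} (h : Equiv.Perm Ω) (T : Set Ω) : Prop :=
  ∃ x, h x ≠ x ∧ T = {x, h x}

/-- The zero-sum vectors in `ℤ^n`. -/
def zeroSum (n : ℕ) : AddSubgroup (Fin n → ℤ) where
  carrier := {m | ∑ j, m j = 0}
  zero_mem' := by simp
  add_mem' := by
    intro a b ha hb
    simp only [Set.mem_setOf_eq] at *
    simp [Finset.sum_add_distrib, ha, hb]
  neg_mem' := by
    intro a ha
    simp only [Set.mem_setOf_eq] at *
    simp [ha]


/-!
Let `H_n` act on `X_n` through `φ`. For a point `x`, join two points of `X_n` by an edge when their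
transposition moves `x`. One transposition, hence each, is a commutator in `H_n` and so moves only
finitely many points under the action; by pigeonhole this forces the graph of `x` to be empty,
complete, or a star. The points with complete graph form a finite invariant set, so all their
orbits are finite.

If `x` has a star centred at `a`, the points `(a p) x` form a copy of `X_n`, and for all but
finitely many `p` an element of `H_n` fixes `(a p) x` exactly when it fixes `p`. Such a copy exists
because `φ` is injective; it matches the `n` source rays with distinct, hence all, target rays, so
elements `φ(g)` can be trivial far out on one ray and nontrivial far out on another. A point with
empty graph is fixed by all commutators, so if its orbit under `φ(h)` is unbounded on a ray, `φ(g)`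
fixes it exactly when `φ(g)` is trivial far out on that ray. An infinite orbit runs off along two
different rays, which some `φ(g)` tells apart; so points on infinite orbits have a star.

An element fixing the centre of the star of `x` and infinitely many other points fixes `x`. Hence
the points of `O` moved by `φ(g_j)` have their centres on the first ray, and between two of them
`φ(g_i)` and `φ(g_j)` act by the same power, because `g_i` and `g_j` agree along that part of the
ray.
-/

section Permutations

open Equiv Filter Function

variable {β : Type*}

/-- A permutation is finitary if it moves only finitely many points. Phrasing this with `cofinite`
lets it combine with the asymptotic behaviour of eventual translations. -/
def IsFinitary (f : Perm β) : Prop := ∀ᶠ x in cofinite, f x = x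

theorem IsFinitary.conj {f : Perm β} (hf : IsFinitary f) (g : Perm β) :
    IsFinitary (g * f * g⁻¹) := by
  filter_upwards [g⁻¹.injective.tendsto_cofinite.eventually hf] with x hx
  rw [mul_assoc, Perm.mul_apply, Perm.mul_apply, hx, Perm.coe_inv, apply_symm_apply]

theorem mem_periodicPts_of_mapsTo_finite {f : β → β} (hf : Injective f) {s : Set β}
    (hs : s.Finite) (hfs : Set.MapsTo f s s) {x : β} (hx : x ∈ s) : x ∈ periodicPts f := by
  have : Finite s := hs
  have hper : (⟨x, hx⟩ : s) ∈ periodicPts (hfs.restrict f s s) :=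
    ((hfs.restrict_inj).2 hf.injOn).mem_periodicPts _
  have hsemi : Semiconj ((↑) : s → β) (hfs.restrict f s s) f := fun _ ↦ rfl
  exact hsemi.mapsTo_periodicPts hper

theorem mem_periodicPts_perm_iff {f : Perm β} {x : β} :
    x ∈ periodicPts f ↔ ∃ k > 0, (f ^ k) x = x := by
  simp only [mem_periodicPts, IsPeriodicPt, IsFixedPt, Perm.iterate_eq_pow]

theorem periodicPts_perm_inv (f : Perm β) : periodicPts ⇑f⁻¹ = periodicPts ⇑f := by
  ext x
  simp only [mem_periodicPts_perm_iff, inv_pow, Perm.inv_eq_iff_eq, @eq_comm _ x]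

theorem injective_pow_apply {f : Perm β} {x : β} (hx : x ∉ periodicPts f) :
    Injective fun k : ℕ ↦ (f ^ k) x := by
  intro k l hkl
  simp only [← Perm.iterate_eq_pow] at hkl
  by_contra hne
  rcases lt_or_gt_of_ne hne with hlt | hlt
  · exact hx (mk_mem_periodicPts (Nat.sub_pos_of_lt hlt) (iterate_cancel f.injective hkl.symm))
  · exact hx (mk_mem_periodicPts (Nat.sub_pos_of_lt hlt) (iterate_cancel f.injective hkl))

theorem mem_permOrbit_iff_sameCycle {f : Perm β} {x y : β} :
    y ∈ permOrbit f x ↔ f.SameCycle x y :=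
  Iff.rfl

theorem InfiniteOrbit.notMem_periodicPts {f : Perm β} {x y : β} (hx : InfiniteOrbit f x)
    (hxy : f.SameCycle x y) : y ∉ periodicPts f := by
  intro hy
  have : NeZero (minimalPeriod (f • ·) y) := ⟨(minimalPeriod_pos_of_mem_periodicPts hy).ne'⟩
  have hfin : (MulAction.orbit (Subgroup.zpowers f) y).Finite :=
    Finite.of_equiv _ (MulAction.orbitZPowersEquiv f y).symm
  refine hx (hfin.subset ?_)
  intro z hz
  obtain ⟨k, rfl⟩ := hxy.symm.trans (mem_permOrbit_iff_sameCycle.1 hz)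
  exact ⟨⟨f ^ k, k, rfl⟩, rfl⟩

end Permutations

section Rays

open Filter
open scoped commutatorElement

theorem cofinite_eq_comap_snd_atTop {ι : Type*} [Finite ι] :
    (cofinite : Filter (ι × ℕ)) = comap Prod.snd atTop := by
  rw [← coprod_cofinite, Filter.coprod, cofinite_eq_bot, comap_bot, bot_sup_eq,
    Nat.cofinite_eq_atTop]

variable {n : ℕ} {g h : Equiv.Perm (XH n)} {u v : Fin n → ℤ}

theorem hasTranslationVector_iff_eventually : HasTranslationVector g u ↔
    ∀ᶠ x in cofinite, (g x).1 = x.1 ∧ ((g x).2 : ℤ) = x.2 + u x.1 := by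
  constructor
  · rintro ⟨K, hK⟩
    exact K.eventually_cofinite_notMem.mono hK
  · intro hg
    exact ⟨(eventually_cofinite.1 hg).toFinset, fun x hx ↦ by simpa using hx⟩

namespace HasTranslationVector

theorem one : HasTranslationVector (1 : Equiv.Perm (XH n)) 0 :=
  ⟨∅, fun x _ ↦ by simp⟩

theorem mul (hg : HasTranslationVector g u) (hh : HasTranslationVector h v) :
    HasTranslationVector (g * h) (u + v) := by
  rw [hasTranslationVector_iff_eventually] at *
  filter_upwards [hh, h.injective.tendsto_cofinite.eventually hg] with x hhx hghx
  simp only [Equiv.Perm.mul_apply, Pi.add_apply, hghx, hhx, true_and]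
  ring

theorem inv (hg : HasTranslationVector g u) : HasTranslationVector g⁻¹ (-u) := by
  rw [hasTranslationVector_iff_eventually] at *
  filter_upwards [g⁻¹.injective.tendsto_cofinite.eventually hg] with x hx
  rw [Equiv.Perm.coe_inv, Equiv.apply_symm_apply] at hx
  rw [Equiv.Perm.coe_inv, Pi.neg_apply, hx.1, hx.2]
  simp

theorem eventually_apply_eq_iff (hg : HasTranslationVector g u) :
    ∀ᶠ x in cofinite, g x = x ↔ u x.1 = 0 := by
  filter_upwards [hasTranslationVector_iff_eventually.1 hg] with x hx
  rw [Prod.ext_iff]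
  omega

theorem isFinitary (hg : HasTranslationVector g 0) : IsFinitary g :=
  hg.eventually_apply_eq_iff.mono fun _ hx ↦ hx.2 rfl

theorem eventually_add_le_pow_apply (hg : HasTranslationVector g u) :
    ∀ᶠ x in cofinite, 0 < u x.1 →
      ∀ k : ℕ, ((g ^ k) x).1 = x.1 ∧ x.2 + k ≤ ((g ^ k) x).2 := by
  rw [hasTranslationVector_iff_eventually, cofinite_eq_comap_snd_atTop, eventually_comap,
    eventually_atTop] at hg
  obtain ⟨N, hN⟩ := hg
  rw [cofinite_eq_comap_snd_atTop]
  filter_upwards [tendsto_comap.eventually_ge_atTop N] with x hx hpos k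
  induction k with
  | zero => simp
  | succ k ih =>
    have hstep := hN _ (hx.trans (Nat.le_of_add_right_le ih.2)) _ rfl
    rw [ih.1] at hstep
    rw [pow_succ', Equiv.Perm.mul_apply]
    exact ⟨hstep.1, by omega⟩

theorem eventually_apply_eq_of_mem_periodicPts (hg : HasTranslationVector g u) :
    ∀ᶠ x in cofinite, x ∈ Function.periodicPts g → g x = x := by
  filter_upwards [hg.eventually_apply_eq_iff, hg.eventually_add_le_pow_apply,
    hg.inv.eventually_add_le_pow_apply] with x hfix hup hdown hx
  rcases lt_trichotomy (u x.1) 0 with hneg | hzero | hpos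
  · rw [← periodicPts_perm_inv, mem_periodicPts_perm_iff] at hx
    obtain ⟨k, hk, hkx⟩ := hx
    have := (hdown (by simpa using hneg) k).2
    rw [hkx] at this
    omega
  · exact hfix.2 hzero
  · obtain ⟨k, hk, hkx⟩ := mem_periodicPts_perm_iff.1 hx
    have := (hup hpos k).2
    rw [hkx] at this
    omega

theorem exists_pos_frequently_pow_apply (hg : HasTranslationVector g u) {x : XH n}
    (hx : x ∉ Function.periodicPts g) :
    ∃ r, 0 < u r ∧ ∃ᶠ k : ℕ in atTop, ((g ^ k) x).1 = r := by
  have htendsto : Tendsto (fun k : ℕ ↦ (g ^ k) x) atTop cofinite :=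
    Nat.cofinite_eq_atTop ▸ (injective_pow_apply hx).tendsto_cofinite
  obtain ⟨r, hr⟩ : ∃ r, ∃ᶠ k : ℕ in atTop, ((g ^ k) x).1 = r :=
    frequently_exists.1 (Frequently.of_forall fun k ↦ ⟨_, rfl⟩)
  refine ⟨r, ?_, hr⟩
  obtain ⟨k, rfl, hfix, hdown, hk⟩ := (hr.and_eventually <|
    (htendsto.eventually hg.eventually_apply_eq_iff).and <|
    (htendsto.eventually hg.inv.eventually_add_le_pow_apply).and <|
    eventually_gt_atTop x.2).exists
  by_contra hnonpos
  rcases (not_lt.1 hnonpos).lt_or_eq with hneg | hzero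
  · have := (hdown (by simpa using hneg) k).2
    rw [inv_pow, Equiv.Perm.coe_inv, Equiv.symm_apply_apply] at this
    omega
  · have hgx : g ((g ^ k) x) = (g ^ k) x := hfix.2 hzero
    rw [← Equiv.Perm.mul_apply, ← pow_succ', pow_succ, Equiv.Perm.mul_apply,
      (g ^ k).injective.eq_iff] at hgx
    exact hx (mem_periodicPts_perm_iff.2 ⟨1, one_pos, by simpa using hgx⟩)

end HasTranslationVector

theorem IsEventualTranslation.isFinitary_commutator (hg : IsEventualTranslation g)
    (hh : IsEventualTranslation h) : IsFinitary ⁅g, h⁆ := by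
  obtain ⟨u, hu⟩ := hg
  obtain ⟨v, hv⟩ := hh
  refine HasTranslationVector.isFinitary ?_
  have := ((hu.mul hv).mul hu.inv).mul hv.inv
  rwa [show u + v + -u + -v = 0 by abel] at this

end Rays

section StarGraphs

open Function SimpleGraph

variable {α : Type*}

theorem starGraph_ne_bot [Nontrivial α] (a : α) : starGraph a ≠ ⊥ := by
  obtain ⟨b, hb⟩ := exists_ne a
  exact ne_bot_iff_exists_adj.2 ⟨a, b, starGraph_adj.2 ⟨hb.symm, .inl rfl⟩⟩

theorem starGraph_injective [Infinite α] : Injective (starGraph : α → SimpleGraph α) := by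
  classical
  intro a b hab
  obtain ⟨c, hc⟩ := Infinite.exists_notMem_finset {a, b}
  have hac : (starGraph b).Adj a c := hab ▸ starGraph_adj.2 ⟨by grind, .inl rfl⟩
  grind [starGraph_adj]

theorem eq_bot_or_eq_starGraph_of_isCompleteMultipartite [Infinite α] {Γ : SimpleGraph α}
    (hΓ : Γ.IsCompleteMultipartite)
    (hmeet : ∀ a b c d, Γ.Adj a b → Γ.Adj c d → a = c ∨ a = d ∨ b = c ∨ b = d) :
    Γ = ⊥ ∨ ∃ a, Γ = starGraph a := by
  classical
  have hsplit : ∀ {a b} (c), Γ.Adj a b → Γ.Adj a c ∨ Γ.Adj c b := fun c hab ↦ by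
    by_contra! h
    exact hΓ.trans _ c _ h.1 h.2 hab
  rcases eq_or_ne Γ ⊥ with hbot | hne
  · exact .inl hbot
  obtain ⟨a, b, c, hab, hac, hbc⟩ : ∃ a b c, Γ.Adj a b ∧ Γ.Adj a c ∧ b ≠ c := by
    obtain ⟨a, b, hab⟩ := ne_bot_iff_exists_adj.1 hne
    obtain ⟨c, hc⟩ := Infinite.exists_notMem_finset {a, b}
    rcases hsplit c hab with hac | hcb
    · exact ⟨a, b, c, hab, hac, by grind⟩
    · exact ⟨b, a, c, hab.symm, hcb.symm, by grind⟩
  have hcentre : ∀ d, d ≠ a → Γ.Adj a d := fun d hd ↦ by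
    by_contra had
    have hbd := (hsplit d hab).resolve_left had
    grind [hmeet _ _ _ _ hbd hac, hab.ne, hac.ne]
  refine .inr ⟨a, ?_⟩
  ext d e
  rw [starGraph_adj]
  refine ⟨fun hde ↦ ⟨hde.ne, ?_⟩, ?_⟩
  · obtain ⟨w, hw⟩ := Infinite.exists_notMem_finset {a, d, e}
    grind [hmeet _ _ _ _ hde (hcentre w (by grind))]
  · rintro ⟨hne, rfl | rfl⟩
    exacts [hcentre e hne.symm, (hcentre d hne).symm]

end StarGraphs

section SwapActions

open Equiv Filter Function SimpleGraph
open scoped commutatorElement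

variable {α β : Type*} [DecidableEq α]

/-- A group of permutations of `α` that contains every transposition, such as a Houghton group. -/
class ContainsSwaps (G : Subgroup (Perm α)) : Prop where
  swap_mem (a b : α) : swap a b ∈ G

variable {G : Subgroup (Perm α)} [ContainsSwaps G]

variable (G) in
/-- The transposition of `a` and `b`, as an element of the group `G`. -/
def swapIn (a b : α) : G := ⟨swap a b, ContainsSwaps.swap_mem a b⟩

theorem swapIn_comm (a b : α) : swapIn G a b = swapIn G b a :=
  Subtype.ext (swap_comm a b)

theorem swapIn_self (a : α) : swapIn G a a = 1 :=
  Subtype.ext (swap_self a)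

theorem swapIn_smul_left (a b : α) : swapIn G a b • a = b :=
  swap_apply_left a b

theorem swapIn_smul_right (a b : α) : swapIn G a b • b = a :=
  swap_apply_right a b

theorem swapIn_smul_of_ne_of_ne {a b c : α} (hca : c ≠ a) (hcb : c ≠ b) :
    swapIn G a b • c = c :=
  swap_apply_of_ne_of_ne hca hcb

theorem swapIn_smul_smul (g : G) (a b : α) :
    swapIn G (g • a) (g • b) = g * swapIn G a b * g⁻¹ :=
  Subtype.ext (swap_apply_apply (g : Perm α) a b)

theorem exists_smul_eq_and_smul_eq {a b c d : α} (hab : a ≠ b) (hcd : c ≠ d) :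
    ∃ g : G, g • a = c ∧ g • b = d := by
  refine ⟨swapIn G (swapIn G a c • b) d * swapIn G a c, ?_, ?_⟩
  · rw [mul_smul, swapIn_smul_left]
    refine swapIn_smul_of_ne_of_ne (fun h ↦ hab ?_) hcd
    rwa [← smul_left_cancel_iff (swapIn G a c), swapIn_smul_left]
  · rw [mul_smul, swapIn_smul_left]

variable {ρ : G →* Perm β} {x : β} {a b c d e f : α} {g : G}

variable (ρ) in
/-- Through `ρ`, every transposition of two points of `α` moves only finitely many points of `β`. -/
def SwapsActFinitarily : Prop := ∀ a b, IsFinitary (ρ (swapIn G a b))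

theorem swapsActFinitarily_of_isFinitary (hab : a ≠ b) (hfin : IsFinitary (ρ (swapIn G a b))) :
    SwapsActFinitarily ρ := by
  intro c d
  rcases eq_or_ne c d with rfl | hcd
  · rw [swapIn_self, map_one]
    exact .of_forall fun _ ↦ rfl
  · obtain ⟨g, rfl, rfl⟩ := exists_smul_eq_and_smul_eq (G := G) hab hcd
    rw [swapIn_smul_smul, map_mul, map_mul, map_inv]
    exact hfin.conj _

theorem apply_apply_eq_of_smul_eq (ha : g • a = c) (hb : g • b = d) (x : β) :
    ρ g (ρ (swapIn G a b) x) = ρ (swapIn G c d) (ρ g x) := by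
  rw [← ha, ← hb, swapIn_smul_smul, ← Perm.mul_apply, ← Perm.mul_apply, ← map_mul, ← map_mul,
    inv_mul_cancel_right]

variable (ρ x) in
/-- The graph on `α` in which `a` and `b` are adjacent when the transposition of `a` and `b`,
acting on `β` through `ρ`, moves `x`. It measures how much the position of `x` in `β` depends on the
points of `α`: not at all if it is empty, on the single point `a` if it is the star centred at
`a`. -/
def swapGraph : SimpleGraph α where
  Adj a b := ρ (swapIn G a b) x ≠ x
  symm := ⟨fun a b hab ↦ by rwa [swapIn_comm]⟩
  loopless := ⟨fun a ha ↦ ha (by rw [swapIn_self, map_one, Perm.one_apply])⟩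

theorem swapGraph_adj : (swapGraph ρ x).Adj a b ↔ ρ (swapIn G a b) x ≠ x :=
  Iff.rfl

theorem swapGraph_eq_bot_iff : swapGraph ρ x = ⊥ ↔ ∀ a b, ρ (swapIn G a b) x = x := by
  simp only [SimpleGraph.ext_iff, funext_iff, swapGraph_adj, bot_adj, eq_iff_iff, iff_false,
    not_not]

theorem swapGraph_apply (g : G) :
    swapGraph ρ (ρ g x) = (swapGraph ρ x).comap (g⁻¹ • ·) := by
  ext a b
  rw [comap_adj, swapGraph_adj, swapGraph_adj,
    ← apply_apply_eq_of_smul_eq (smul_inv_smul g a) (smul_inv_smul g b), (ρ g).injective.ne_iff]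

theorem swapGraph_apply_eq_top (hx : swapGraph ρ x = ⊤) (g : G) : swapGraph ρ (ρ g x) = ⊤ := by
  rw [swapGraph_apply, hx, SimpleGraph.comap_top (MulAction.injective g⁻¹)]

theorem swapGraph_apply_eq_starGraph (hx : swapGraph ρ x = starGraph a) (g : G) :
    swapGraph ρ (ρ g x) = starGraph (g • a) := by
  ext b c
  simp only [swapGraph_apply, hx, comap_adj, starGraph_adj, (MulAction.injective g⁻¹).ne_iff,
    inv_smul_eq_iff]

theorem isCompleteMultipartite_swapGraph (ρ : G →* Perm β) (x : β) :
    (swapGraph ρ x).IsCompleteMultipartite := by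
  refine ⟨fun a b c hab hbc ↦ ?_⟩
  rcases eq_or_ne c a with rfl | hca
  · exact (swapGraph ρ x).irrefl
  rcases eq_or_ne c b with rfl | hcb
  · exact hab
  simp only [swapGraph_adj, not_not] at hab hbc ⊢
  have := apply_apply_eq_of_smul_eq (ρ := ρ) (swapIn_smul_right a b)
    (swapIn_smul_of_ne_of_ne (G := G) hca hcb) x
  rw [hbc, hab] at this
  exact this.symm

theorem swapGraph_adj_apply_iff (ha : g • a = a) (hb : g • b = b) :
    (swapGraph ρ (ρ g x)).Adj a b ↔ (swapGraph ρ x).Adj a b := by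
  rw [swapGraph_apply, comap_adj, inv_smul_eq_iff.2 ha.symm, inv_smul_eq_iff.2 hb.symm]

theorem SwapsActFinitarily.finite_setOf_adj (hρ : SwapsActFinitarily ρ) (a b : α) :
    {x | (swapGraph ρ x).Adj a b}.Finite :=
  hρ a b

theorem SwapsActFinitarily.finite_setOf_swapGraph_eq (hρ : SwapsActFinitarily ρ)
    {Γ : SimpleGraph α} (hΓ : Γ ≠ ⊥) : {x | swapGraph ρ x = Γ}.Finite := by
  obtain ⟨a, b, hab⟩ := ne_bot_iff_exists_adj.1 hΓ
  refine (hρ.finite_setOf_adj a b).subset ?_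
  rintro x rfl
  exact hab

theorem SwapsActFinitarily.mem_periodicPts_of_swapGraph_eq_top [Nontrivial α]
    (hρ : SwapsActFinitarily ρ) (hx : swapGraph ρ x = ⊤) (g : G) : x ∈ periodicPts (ρ g) :=
  mem_periodicPts_of_mapsTo_finite (ρ g).injective (hρ.finite_setOf_swapGraph_eq top_ne_bot)
    (fun _ hy ↦ swapGraph_apply_eq_top hy g) hx

theorem SwapsActFinitarily.smul_eq_iff_apply_eq [Infinite α] (hρ : SwapsActFinitarily ρ)
    (hx : swapGraph ρ x = starGraph a) (hper : x ∈ periodicPts (ρ g) → ρ g x = x) :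
    g • a = a ↔ ρ g x = x := by
  refine ⟨fun ha ↦ hper <| mem_periodicPts_of_mapsTo_finite (ρ g).injective
    (hρ.finite_setOf_swapGraph_eq (starGraph_ne_bot a)) (fun y hy ↦ ?_) hx, fun hgx ↦ ?_⟩
  · exact (swapGraph_apply_eq_starGraph hy g).trans (congrArg starGraph ha)
  · exact starGraph_injective (by rw [← swapGraph_apply_eq_starGraph hx, hgx, hx])

theorem swapGraph_apply_swapIn (hx : swapGraph ρ x = starGraph a) (p : α) :
    swapGraph ρ (ρ (swapIn G a p) x) = starGraph p := by
  rw [swapGraph_apply_eq_starGraph hx, swapIn_smul_left]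

theorem injective_apply_swapIn [Infinite α] (hx : swapGraph ρ x = starGraph a) :
    Injective fun p ↦ ρ (swapIn G a p) x := fun p q hpq ↦
  starGraph_injective <| by
    rw [← swapGraph_apply_swapIn hx p, ← swapGraph_apply_swapIn hx q]
    exact congrArg _ hpq

theorem SwapsActFinitarily.apply_eq_of_swapGraph_eq_starGraph [Infinite α]
    (hρ : SwapsActFinitarily ρ) (hx : swapGraph ρ x = starGraph a) (ha : g • a = a)
    (hinf : (MulAction.fixedBy α g).Infinite)
    (hper : ∀ᶠ y in cofinite, y ∈ periodicPts (ρ g) → ρ g y = y) : ρ g x = x := by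
  obtain ⟨p, hp, hpper⟩ := (hinf.frequently_cofinite.and_eventually
    ((injective_apply_swapIn hx).tendsto_cofinite.eventually hper)).exists
  have hfixed := (hρ.smul_eq_iff_apply_eq (swapGraph_apply_swapIn hx p) hpper).1 hp
  rw [apply_apply_eq_of_smul_eq ha hp] at hfixed
  exact (ρ _).injective hfixed

theorem apply_eq_of_swapGraph_eq_bot (hx : swapGraph ρ x = ⊥) (hg : IsFinitary (g : Perm α)) :
    ρ g x = x := by
  have hle : Subgroup.closure {σ : Perm α | σ.IsSwap} ≤
      ((MulAction.stabilizer (Perm β) x).comap ρ).map G.subtype := by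
    rw [Subgroup.closure_le]
    rintro _ ⟨a, b, -, rfl⟩
    exact ⟨swapIn G a b, swapGraph_eq_bot_iff.1 hx a b, rfl⟩
  obtain ⟨u, hu, hug⟩ := hle (mem_closure_isSwap'.2 hg)
  rwa [← Subtype.ext hug]

theorem apply_apply_eq_iff_of_swapGraph_eq_bot (hx : swapGraph ρ x = ⊥) {h : G}
    (hgh : IsFinitary ((⁅g⁻¹, h⁻¹⁆ : G) : Perm α)) : ρ g (ρ h x) = ρ h x ↔ ρ g x = x := by
  have hcomm : ρ (g * h) x = ρ (h * g) x := by
    rw [show g * h = h * g * ⁅g⁻¹, h⁻¹⁆ by group, map_mul, Perm.mul_apply,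
      apply_eq_of_swapGraph_eq_bot hx hgh]
  rw [← Perm.mul_apply, ← map_mul, hcomm, map_mul, Perm.mul_apply, (ρ h).injective.eq_iff]

theorem SwapsActFinitarily.exists_apply_swapIn_eq [Infinite α] (hρ : SwapsActFinitarily ρ)
    (hea : e ≠ a) (heb : e ≠ b) : ∃ q, ∀ f, f ≠ a → f ≠ b → f ≠ e →
      ∀ x, (swapGraph ρ x).Adj a b → ρ (swapIn G e f) x = ρ (swapIn G e q) x := by
  let S : Set β := {x | (swapGraph ρ x).Adj a b}
  let T : Set α := {f | f ≠ a ∧ f ≠ b ∧ f ≠ e}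
  have : Finite S := hρ.finite_setOf_adj a b
  have : Infinite T := by
    refine Set.infinite_coe_iff.2 (Set.Finite.infinite_compl (s := {a, b, e}) ?_ |>.mono ?_)
    · exact Set.toFinite _
    · intro f hf
      simpa [T] using hf
  let F (f : T) (y : S) : S := ⟨ρ (swapIn G e f) y, (swapGraph_adj_apply_iff
    (swapIn_smul_of_ne_of_ne hea.symm f.2.1.symm)
    (swapIn_smul_of_ne_of_ne heb.symm f.2.2.1.symm)).2 y.2⟩
  obtain ⟨⟨q, hqa, hqb, hqe⟩, ⟨q', hqa', hqb', hqe'⟩, hne, hF⟩ :=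
    Finite.exists_ne_map_eq_of_infinite F
  refine ⟨q', fun f hfa hfb hfe x hx ↦ ?_⟩
  rcases eq_or_ne f q' with rfl | hfq'
  · rfl
  -- The transposition of `q` and `f` carries the coincidence `(e q) = (e q')` to `(e f) = (e q')`.
  let σ := swapIn G q f
  obtain ⟨y, rfl⟩ := (ρ σ).surjective x
  rw [swapGraph_adj_apply_iff (swapIn_smul_of_ne_of_ne hqa.symm hfa.symm)
    (swapIn_smul_of_ne_of_ne hqb.symm hfb.symm)] at hx
  have hσe : σ • e = e := swapIn_smul_of_ne_of_ne hqe.symm hfe.symm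
  have hσq' : σ • q' = q' := swapIn_smul_of_ne_of_ne (by grind) hfq'.symm
  have hFy : ρ (swapIn G e q) y = ρ (swapIn G e q') y := congrArg Subtype.val (congrFun hF ⟨y, hx⟩)
  rw [← apply_apply_eq_of_smul_eq hσe (swapIn_smul_left q f), hFy,
    apply_apply_eq_of_smul_eq hσe hσq']

theorem SwapsActFinitarily.apply_swapIn_eq_of_adj [Infinite α] (hρ : SwapsActFinitarily ρ)
    (hab : (swapGraph ρ x).Adj a b) {c d e f : α} (hcd : c ≠ d) (hef : e ≠ f)
    (hc : c ∉ ({a, b} : Finset α)) (hd : d ∉ ({a, b} : Finset α)) (he : e ∉ ({a, b} : Finset α))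
    (hf : f ∉ ({a, b} : Finset α)) : ρ (swapIn G c d) x = ρ (swapIn G e f) x := by
  have hshare {r s t : α} (hr : r ∉ ({a, b} : Finset α)) (hs : s ∉ ({a, b} : Finset α))
      (ht : t ∉ ({a, b} : Finset α)) (hrs : r ≠ s) (hrt : r ≠ t) :
      ρ (swapIn G r s) x = ρ (swapIn G r t) x := by
    obtain ⟨q, hq⟩ := hρ.exists_apply_swapIn_eq (e := r) (a := a) (b := b) (by grind) (by grind)
    rw [hq s (by grind) (by grind) hrs.symm x hab, hq t (by grind) (by grind) hrt.symm x hab]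
  rcases eq_or_ne c e with rfl | hce
  · exact hshare hc hd hf hcd hef
  · rw [hshare hc hd he hcd hce, swapIn_comm, hshare he hc hf hce.symm hef]

theorem SwapsActFinitarily.swapGraph_eq_top_of_disjoint_edges [Infinite α]
    (hρ : SwapsActFinitarily ρ) (hab : (swapGraph ρ x).Adj a b) (hcd : (swapGraph ρ x).Adj c d)
    (hc : c ∉ ({a, b} : Finset α)) (hd : d ∉ ({a, b} : Finset α)) : swapGraph ρ x = ⊤ := by
  refine eq_top_iff.2 fun e f hef ↦ ?_
  obtain ⟨p, hp⟩ := Infinite.exists_notMem_finset {a, b, e, f}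
  obtain ⟨q, hq⟩ := Infinite.exists_notMem_finset {a, b, e, f, p}
  have hpq : (swapGraph ρ x).Adj p q := by
    rwa [swapGraph_adj, hρ.apply_swapIn_eq_of_adj hab (c := p) (d := q) (e := c) (f := d) (by grind)
      hcd.ne (by grind) (by grind) hc hd]
  rwa [swapGraph_adj, hρ.apply_swapIn_eq_of_adj hpq (c := e) (d := f) (e := a) (f := b) hef
    hab.ne (by grind) (by grind) (by grind) (by grind)]

theorem SwapsActFinitarily.swapGraph_trichotomy [Infinite α] (hρ : SwapsActFinitarily ρ) (x : β) :
    swapGraph ρ x = ⊥ ∨ swapGraph ρ x = ⊤ ∨ ∃ a, swapGraph ρ x = starGraph a := by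
  rcases eq_or_ne (swapGraph ρ x) ⊤ with htop | hne
  · exact .inr (.inl htop)
  refine (eq_bot_or_eq_starGraph_of_isCompleteMultipartite (isCompleteMultipartite_swapGraph ρ x)
    fun a b c d hab hcd ↦ ?_).imp_right .inr
  by_contra! hdisj
  exact hne (hρ.swapGraph_eq_top_of_disjoint_edges hab hcd (by grind) (by grind))

theorem SwapsActFinitarily.exists_swapGraph_eq_starGraph [Infinite α] (hρ : SwapsActFinitarily ρ)
    (hinj : Injective ρ) : ∃ x a, swapGraph ρ x = starGraph a := by
  obtain ⟨a⟩ : Nonempty α := inferInstance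
  obtain ⟨b, hb⟩ := Infinite.exists_notMem_finset {a}
  obtain ⟨c, hc⟩ := Infinite.exists_notMem_finset {a, b}
  have hne : ρ (swapIn G a b) ≠ ρ (swapIn G a c) := fun h ↦ by
    have := congrArg (· • a) (hinj h)
    simp only [swapIn_smul_left] at this
    grind
  obtain ⟨x, hx⟩ := not_forall.1 (mt Perm.ext hne)
  refine ⟨x, ((hρ.swapGraph_trichotomy x).resolve_left fun hbot ↦ hx ?_).resolve_left
    fun htop ↦ hx ?_⟩
  · rw [swapGraph_eq_bot_iff] at hbot
    rw [hbot, hbot]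
  · obtain ⟨d, hd⟩ := Infinite.exists_notMem_finset {a, b, c}
    obtain ⟨e, he⟩ := Infinite.exists_notMem_finset {a, b, c, d}
    have hde : (swapGraph ρ x).Adj d e := htop ▸ (top_adj _ _).2 (by grind)
    exact hρ.apply_swapIn_eq_of_adj hde (by grind) (by grind) (by grind) (by grind) (by grind)
      (by grind)

end SwapActions

section Generators

open Filter
open scoped commutatorElement

variable {n : ℕ} {h0 : 0 < n} {i j r s : Fin n}

instance : ContainsSwaps (Houghton n) := ⟨swap_mem_houghton⟩

theorem hGen_smul (hi : i ≠ ray0 n h0) (x : XH n) : hGen n h0 i hi • x = gFun n h0 i x :=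
  rfl

theorem hGen_smul_ray0_zero (hi : i ≠ ray0 n h0) :
    hGen n h0 i hi • (ray0 n h0, 0) = (i, 0) := by
  simp [hGen_smul, gFun]

theorem hGen_smul_ray0_succ (hi : i ≠ ray0 n h0) (p : ℕ) :
    hGen n h0 i hi • (ray0 n h0, p + 1) = (ray0 n h0, p) := by
  simp [hGen_smul, gFun]

theorem hGen_smul_self (hi : i ≠ ray0 n h0) (p : ℕ) :
    hGen n h0 i hi • (i, p) = (i, p + 1) := by
  simp [hGen_smul, gFun, hi]

theorem hGen_smul_of_ne_of_ne (hi : i ≠ ray0 n h0) {x : XH n} (hx0 : x.1 ≠ ray0 n h0)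
    (hxi : x.1 ≠ i) : hGen n h0 i hi • x = x := by
  simp [hGen_smul, gFun, hx0, hxi]

theorem hGen_pow_smul_ray0 (hi : i ≠ ray0 n h0) (k p : ℕ) :
    hGen n h0 i hi ^ k • (ray0 n h0, p + k) = (ray0 n h0, p) := by
  induction k with
  | zero => exact one_smul _ _
  | succ k ih => rw [pow_succ, mul_smul, ← add_assoc, hGen_smul_ray0_succ, ih]

theorem hasTranslationVector_hGen (hi : i ≠ ray0 n h0) :
    HasTranslationVector (hGen n h0 i hi : Equiv.Perm (XH n))
      (Pi.single i 1 - Pi.single (ray0 n h0) 1) := by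
  refine ⟨{(ray0 n h0, 0)}, ?_⟩
  rintro ⟨r, p⟩ hx
  change (hGen n h0 i hi • (r, p)).1 = r ∧ ((hGen n h0 i hi • (r, p)).2 : ℤ) = _
  rcases eq_or_ne r (ray0 n h0) with rfl | hr0
  · obtain ⟨p, rfl⟩ := Nat.exists_eq_succ_of_ne_zero (n := p) (by rintro rfl; simp at hx)
    simp [hGen_smul_ray0_succ, hi.symm]
  rcases eq_or_ne r i with rfl | hri
  · simp [hGen_smul_self, hi]
  · simp [hGen_smul_of_ne_of_ne hi (x := (r, p)) hr0 hri, hr0, hri]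

theorem commutator_hGen_inv (hi : i ≠ ray0 n h0) (hj : j ≠ ray0 n h0) (hij : i ≠ j) :
    ⁅(hGen n h0 i hi)⁻¹, (hGen n h0 j hj)⁻¹⁆ =
      swapIn (Houghton n) (ray0 n h0, 0) (ray0 n h0, 1) := by
  suffices hGen n h0 i hi * hGen n h0 j hj =
      hGen n h0 j hj * hGen n h0 i hi * swapIn (Houghton n) (ray0 n h0, 0) (ray0 n h0, 1) by
    rw [commutatorElement_def, inv_inv, inv_inv, mul_assoc, this]
    group
  refine FaithfulSMul.eq_of_smul_eq_smul (α := XH n) fun x ↦ ?_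
  simp only [mul_smul]
  have hne {r s : Fin n} (hrs : r ≠ s) (p q : ℕ) : (r, p) ≠ (s, q) := by simp [hrs]
  rcases x with ⟨r, p⟩
  rcases eq_or_ne r (ray0 n h0) with rfl | hr0
  · rcases p with _ | _ | p
    · rw [swapIn_smul_left, hGen_smul_ray0_zero, hGen_smul_of_ne_of_ne hi hj hij.symm,
        ← zero_add 1, hGen_smul_ray0_succ, hGen_smul_ray0_zero]
    · rw [zero_add, swapIn_smul_right, ← zero_add 1, hGen_smul_ray0_succ, hGen_smul_ray0_zero,
        hGen_smul_of_ne_of_ne hj hi hij]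
    · rw [swapIn_smul_of_ne_of_ne (by simp) (by simp)]
      simp only [hGen_smul_ray0_succ]
  · rw [swapIn_smul_of_ne_of_ne (hne hr0 _ _) (hne hr0 _ _)]
    rcases eq_or_ne r i with rfl | hri
    · simp only [hGen_smul_self, hGen_smul_of_ne_of_ne hj, hi, hij, ne_eq, not_false_eq_true]
    rcases eq_or_ne r j with rfl | hrj
    · simp only [hGen_smul_self, hGen_smul_of_ne_of_ne hi, hj, hij.symm, ne_eq, not_false_eq_true]
    · rw [hGen_smul_of_ne_of_ne hj hr0 hrj, hGen_smul_of_ne_of_ne hi hr0 hri,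
        hGen_smul_of_ne_of_ne hj hr0 hrj]

theorem exists_hasTranslationVector_single_sub_single (r s : Fin n) :
    ∃ g : Houghton n,
      HasTranslationVector (g : Equiv.Perm (XH n)) (Pi.single r 1 - Pi.single s 1) := by
  have h0 : 0 < n := r.pos
  have hgen (t : Fin n) : ∃ g : Houghton n, HasTranslationVector (g : Equiv.Perm (XH n))
      (Pi.single t 1 - Pi.single (ray0 n h0) 1) := by
    rcases eq_or_ne t (ray0 n h0) with rfl | ht
    · exact ⟨1, by rw [sub_self]; exact .one⟩
    · exact ⟨_, hasTranslationVector_hGen ht⟩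
  obtain ⟨g, hg⟩ := hgen r
  obtain ⟨h, hh⟩ := hgen s
  refine ⟨g * h⁻¹, ?_⟩
  rw [← sub_sub_sub_cancel_right, sub_eq_add_neg]
  exact hg.mul hh.inv

theorem exists_hasTranslationVector_eq_zero_ne_zero (hn : 3 ≤ n) (hrs : r ≠ s) :
    ∃ (g : Houghton n) (u : Fin n → ℤ),
      HasTranslationVector (g : Equiv.Perm (XH n)) u ∧ u r = 0 ∧ u s ≠ 0 := by
  obtain ⟨t, htr, hts⟩ := Fin.exists_ne_and_ne_of_two_lt r s hn
  obtain ⟨g, hg⟩ := exists_hasTranslationVector_single_sub_single s t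
  exact ⟨g, _, hg, by simp [hrs, htr.symm], by simp [hts]⟩

theorem infinite_fixedBy_of_forall_smul_eq {g : Houghton n} {k : ℕ}
    (hr : ∀ p, g • (r, p + k) = (r, p + k)) : (MulAction.fixedBy (XH n) g).Infinite :=
  Set.infinite_of_injective_forall_mem
    ((Prod.mk_right_injective r).comp (add_left_injective k)) hr

end Generators

section HoughtonActions

open Filter Function SimpleGraph

variable {n m : ℕ}

/-- The action of `H_n` on the rays `X_m` through a homomorphism `H_n → H_m`. -/
def actionThrough (φ : Houghton n →* Houghton m) : Houghton n →* Equiv.Perm (XH m) :=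
  (Houghton m).subtype.comp φ

variable {φ : Houghton n →* Houghton m}

theorem isEventualTranslation_actionThrough (φ : Houghton n →* Houghton m) (g : Houghton n) :
    IsEventualTranslation (actionThrough φ g) :=
  (φ g).2

theorem swapsActFinitarily_actionThrough (hn : 3 ≤ n) (φ : Houghton n →* Houghton m) :
    SwapsActFinitarily (actionThrough φ) := by
  have h0 : 0 < n := by omega
  obtain ⟨i, hi, -⟩ := Fin.exists_ne_and_ne_of_two_lt (ray0 n h0) (ray0 n h0) hn
  obtain ⟨j, hj, hji⟩ := Fin.exists_ne_and_ne_of_two_lt (ray0 n h0) i hn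
  refine swapsActFinitarily_of_isFinitary (a := (ray0 n h0, 0)) (b := (ray0 n h0, 1)) (by simp) ?_
  rw [← commutator_hGen_inv hi hj hji.symm, map_commutatorElement]
  exact (isEventualTranslation_actionThrough φ _).isFinitary_commutator
    (isEventualTranslation_actionThrough φ _)

theorem eventually_actionThrough_eq_of_mem_periodicPts (φ : Houghton n →* Houghton m)
    (g : Houghton n) : ∀ᶠ x in cofinite,
      x ∈ periodicPts (actionThrough φ g) → actionThrough φ g x = x :=
  (isEventualTranslation_actionThrough φ g).choose_spec.eventually_apply_eq_of_mem_periodicPts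

theorem exists_ray_forall_eq_zero_iff (hn : 3 ≤ n) {x : XH m} {a : XH n}
    (hx : swapGraph (actionThrough φ) x = starGraph a) (r : Fin n) :
    ∃ s : Fin m, ∀ (g : Houghton n) (u : Fin n → ℤ) (v : Fin m → ℤ),
      HasTranslationVector (g : Equiv.Perm (XH n)) u →
      HasTranslationVector (actionThrough φ g) v → (u r = 0 ↔ v s = 0) := by
  have : Nonempty (Fin n) := ⟨r⟩
  have hρ := swapsActFinitarily_actionThrough hn φ
  let y (p : ℕ) : XH m := actionThrough φ (swapIn (Houghton n) a (r, p)) x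
  have hray : Tendsto (fun p : ℕ ↦ (r, p)) atTop cofinite :=
    Nat.cofinite_eq_atTop ▸ (Prod.mk_right_injective r).tendsto_cofinite
  have hy : Tendsto y atTop cofinite := (injective_apply_swapIn hx).tendsto_cofinite.comp hray
  obtain ⟨s, hs⟩ : ∃ s, ∃ᶠ p in atTop, (y p).1 = s :=
    frequently_exists.1 (.of_forall fun p ↦ ⟨_, rfl⟩)
  refine ⟨s, fun g u v hu hv ↦ ?_⟩
  obtain ⟨p, rfl, hpu, hpv, hper⟩ := (hs.and_eventually <|
    (hray.eventually hu.eventually_apply_eq_iff).and <|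
    (hy.eventually hv.eventually_apply_eq_iff).and <|
    hy.eventually hv.eventually_apply_eq_of_mem_periodicPts).exists
  rw [← hpu, ← hpv, ← hρ.smul_eq_iff_apply_eq (swapGraph_apply_swapIn hx (r, p)) hper]
  rfl

theorem exists_actionThrough_eq_zero_ne_zero {φ : Houghton n →* Houghton n} (hn : 3 ≤ n)
    (hφ : Injective φ) {r s : Fin n} (hrs : r ≠ s) : ∃ (g : Houghton n) (v : Fin n → ℤ),
      HasTranslationVector (actionThrough φ g) v ∧ v r = 0 ∧ v s ≠ 0 := by
  have : NeZero n := ⟨by omega⟩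
  obtain ⟨x, a, hx⟩ := (swapsActFinitarily_actionThrough hn φ).exists_swapGraph_eq_starGraph
    (Subtype.val_injective.comp hφ)
  choose κ hκ using exists_ray_forall_eq_zero_iff hn hx
  have hinj : Injective κ := fun r s hrs ↦ by
    by_contra hne
    obtain ⟨g, u, hu, hur, hus⟩ := exists_hasTranslationVector_eq_zero_ne_zero hn hne
    obtain ⟨v, hv⟩ := isEventualTranslation_actionThrough φ g
    exact hus ((hκ s g u v hu hv).2 (hrs ▸ (hκ r g u v hu hv).1 hur))
  obtain ⟨r, rfl⟩ := Finite.surjective_of_injective hinj r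
  obtain ⟨s, rfl⟩ := Finite.surjective_of_injective hinj s
  obtain ⟨g, u, hu, hur, hus⟩ :=
    exists_hasTranslationVector_eq_zero_ne_zero hn (ne_of_apply_ne κ hrs)
  obtain ⟨v, hv⟩ := isEventualTranslation_actionThrough φ g
  exact ⟨g, v, hv, (hκ r g u v hu hv).1 hur, mt (hκ s g u v hu hv).2 hus⟩

theorem actionThrough_apply_eq_iff_of_frequently {x : XH m}
    (hx : swapGraph (actionThrough φ) x = ⊥) {h : Houghton n}
    (hper : x ∉ periodicPts (actionThrough φ h)) {r : Fin m}
    (hr : ∃ᶠ k : ℕ in atTop, ((actionThrough φ h ^ k) x).1 = r) {g : Houghton n} {v : Fin m → ℤ}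
    (hv : HasTranslationVector (actionThrough φ g) v) : actionThrough φ g x = x ↔ v r = 0 := by
  have horbit : Tendsto (fun k : ℕ ↦ (actionThrough φ h ^ k) x) atTop cofinite :=
    Nat.cofinite_eq_atTop ▸ (injective_pow_apply hper).tendsto_cofinite
  obtain ⟨k, rfl, hk⟩ := (hr.and_eventually (horbit.eventually hv.eventually_apply_eq_iff)).exists
  rw [← hk, ← map_pow]
  exact (apply_apply_eq_iff_of_swapGraph_eq_bot hx
    (IsEventualTranslation.isFinitary_commutator g⁻¹.2 (h ^ k)⁻¹.2)).symm

theorem mem_periodicPts_of_swapGraph_eq_bot {φ : Houghton n →* Houghton n} (hn : 3 ≤ n)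
    (hφ : Injective φ) {x : XH n} (hx : swapGraph (actionThrough φ) x = ⊥) (h : Houghton n) :
    x ∈ periodicPts (actionThrough φ h) := by
  by_contra hper
  have hper_inv : x ∉ periodicPts (actionThrough φ h⁻¹) := by
    rwa [map_inv, periodicPts_perm_inv]
  obtain ⟨v, hv⟩ := isEventualTranslation_actionThrough φ h
  obtain ⟨r, hvr, hr⟩ := hv.exists_pos_frequently_pow_apply hper
  obtain ⟨s, hvs, hs⟩ := (map_inv (actionThrough φ) h ▸ hv.inv).exists_pos_frequently_pow_apply
    hper_inv
  have hrs : r ≠ s := by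
    rintro rfl
    rw [Pi.neg_apply] at hvs
    omega
  obtain ⟨g, w, hw, hwr, hws⟩ := exists_actionThrough_eq_zero_ne_zero hn hφ hrs
  exact hws ((actionThrough_apply_eq_iff_of_frequently hx hper_inv hs hw).1
    ((actionThrough_apply_eq_iff_of_frequently hx hper hr hw).2 hwr))

theorem exists_swapGraph_eq_starGraph_of_notMem_periodicPts {φ : Houghton n →* Houghton n}
    (hn : 3 ≤ n) (hφ : Injective φ) {x : XH n} {h : Houghton n}
    (hper : x ∉ periodicPts (actionThrough φ h)) :
    ∃ a, swapGraph (actionThrough φ) x = starGraph a := by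
  have : NeZero n := ⟨by omega⟩
  have hρ := swapsActFinitarily_actionThrough hn φ
  exact ((hρ.swapGraph_trichotomy x).resolve_left fun hbot ↦
    hper (mem_periodicPts_of_swapGraph_eq_bot hn hφ hbot h)).resolve_left fun htop ↦
    hper (hρ.mem_periodicPts_of_swapGraph_eq_top htop h)

theorem actionThrough_apply_eq_of_smul_eq (hn : 3 ≤ n) {x : XH m} {a : XH n}
    (hx : swapGraph (actionThrough φ) x = starGraph a) {g : Houghton n} (ha : g • a = a)
    {r : Fin n} {k : ℕ} (hr : ∀ p, g • (r, p + k) = (r, p + k)) : actionThrough φ g x = x :=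
  have : Nonempty (Fin n) := ⟨r⟩
  (swapsActFinitarily_actionThrough hn φ).apply_eq_of_swapGraph_eq_starGraph hx ha
    (infinite_fixedBy_of_forall_smul_eq hr)
    (eventually_actionThrough_eq_of_mem_periodicPts φ g)

variable {h0 : 0 < n} {i j : Fin n} (hi : i ≠ ray0 n h0) (hj : j ≠ ray0 n h0)

theorem fst_eq_ray0_of_swapGraph_eq_starGraph (hn : 3 ≤ n) (hij : i ≠ j) {z : XH m} {a : XH n}
    (hz : swapGraph (actionThrough φ) z = starGraph a)
    (hper : z ∉ periodicPts (actionThrough φ (hGen n h0 i hi)))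
    (hmoved : actionThrough φ (hGen n h0 j hj) z ≠ z) : a.1 = ray0 n h0 := by
  by_contra ha
  have hai : a.1 = i := by
    by_contra hai
    have hfix := actionThrough_apply_eq_of_smul_eq hn hz (hGen_smul_of_ne_of_ne hi ha hai)
      (k := 0) fun p ↦ hGen_smul_of_ne_of_ne hi (x := (j, p)) hj hij.symm
    exact hper (mem_periodicPts_perm_iff.2 ⟨1, one_pos, by rwa [pow_one]⟩)
  exact hmoved (actionThrough_apply_eq_of_smul_eq hn hz
    (hGen_smul_of_ne_of_ne hj ha (hai.trans_ne hij))
    (k := 0) fun p ↦ hGen_smul_of_ne_of_ne hj (x := (i, p)) hi hij)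

theorem exists_swapGraph_eq_starGraph_ray0 {φ : Houghton n →* Houghton n} (hn : 3 ≤ n)
    (hφ : Injective φ) (hij : i ≠ j) {z : XH n}
    (hper : z ∉ periodicPts (actionThrough φ (hGen n h0 i hi)))
    (hmoved : actionThrough φ (hGen n h0 j hj) z ≠ z) :
    ∃ p, swapGraph (actionThrough φ) z = starGraph (ray0 n h0, p) := by
  obtain ⟨⟨r, p⟩, hz⟩ := exists_swapGraph_eq_starGraph_of_notMem_periodicPts hn hφ hper
  obtain rfl : r = ray0 n h0 := fst_eq_ray0_of_swapGraph_eq_starGraph hi hj hn hij hz hper hmoved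
  exact ⟨p, hz⟩

theorem actionThrough_hGen_pow_eq (hn : 3 ≤ n) {z w : XH m} {p q : ℕ}
    (hz : swapGraph (actionThrough φ) z = starGraph (ray0 n h0, p))
    (hw : swapGraph (actionThrough φ) w = starGraph (ray0 n h0, q)) {k : ℕ}
    (hzw : (actionThrough φ (hGen n h0 i hi) ^ k) z = w) :
    (actionThrough φ (hGen n h0 j hj) ^ k) z = w := by
  have : NeZero n := ⟨by omega⟩
  subst hzw
  rw [← map_pow] at hw ⊢
  have hp : p = q + k := by
    have hcentre : hGen n h0 i hi ^ k • (ray0 n h0, p) = (ray0 n h0, q) :=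
      starGraph_injective (by rw [← swapGraph_apply_eq_starGraph hz, hw])
    rw [← hGen_pow_smul_ray0 hi k q, smul_left_cancel_iff] at hcentre
    exact congrArg Prod.snd hcentre
  have hfix (t : ℕ) : ((hGen n h0 j hj ^ k)⁻¹ * hGen n h0 i hi ^ k) • (ray0 n h0, t + k) =
      (ray0 n h0, t + k) := by
    rw [mul_smul, inv_smul_eq_iff, hGen_pow_smul_ray0, hGen_pow_smul_ray0]
  subst hp
  have := actionThrough_apply_eq_of_smul_eq hn hz (hfix q) hfix
  rw [map_mul, map_inv, Equiv.Perm.mul_apply, Equiv.Perm.inv_eq_iff_eq] at this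
  rw [← map_pow, ← this]

theorem sameCycle_actionThrough_hGen (hn : 3 ≤ n) {z w : XH m} {p q : ℕ}
    (hz : swapGraph (actionThrough φ) z = starGraph (ray0 n h0, p))
    (hw : swapGraph (actionThrough φ) w = starGraph (ray0 n h0, q))
    (hzw : (actionThrough φ (hGen n h0 i hi)).SameCycle z w) :
    (actionThrough φ (hGen n h0 j hj)).SameCycle z w := by
  obtain ⟨k, hk⟩ := hzw
  obtain ⟨k, rfl | rfl⟩ := k.eq_nat_or_neg
  · rw [zpow_natCast] at hk
    exact ⟨k, actionThrough_hGen_pow_eq hi hj hn hz hw hk⟩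
  · rw [zpow_neg, zpow_natCast, Equiv.Perm.inv_eq_iff_eq] at hk
    exact .symm ⟨k, actionThrough_hGen_pow_eq hi hj hn hw hz hk.symm⟩

end HoughtonActions

/-- For `n ≥ 3`, an injective endomorphism `φ` of `H_n`, and
distinct `i, j ∈ {2,…,n}`: if `O` is an infinite orbit of `φ(g_i)`, then all
points of `O` moved by `φ(g_j)` lie in a single orbit of `φ(g_j)`. -/
theorem monomorphism_orbit_meets_single_orbit
    (n : ℕ) (hn : 3 ≤ n) (h0 : 0 < n)
    (φ : Houghton n →* Houghton n) (hφ : Function.Injective φ)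
    (i j : Fin n) (hi : i ≠ ray0 n h0) (hj : j ≠ ray0 n h0) (hij : i ≠ j)
    (x : XH n) (hx : InfiniteOrbit (imageGen h0 φ i hi) x) :
    ∃ x' : XH n, ∀ z ∈ permOrbit (imageGen h0 φ i hi) x,
      imageGen h0 φ j hj z ≠ z → z ∈ permOrbit (imageGen h0 φ j hj) x' := by
  have hcycle {z w : XH n} (hz : z ∈ permOrbit (imageGen h0 φ i hi) x)
      (hw : w ∈ permOrbit (imageGen h0 φ i hi) x) (hzj : imageGen h0 φ j hj z ≠ z)
      (hwj : imageGen h0 φ j hj w ≠ w) : w ∈ permOrbit (imageGen h0 φ j hj) z := by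
    rw [mem_permOrbit_iff_sameCycle] at hz hw ⊢
    obtain ⟨p, hp⟩ := exists_swapGraph_eq_starGraph_ray0 hi hj hn hφ hij
      (hx.notMem_periodicPts hz) hzj
    obtain ⟨q, hq⟩ := exists_swapGraph_eq_starGraph_ray0 hi hj hn hφ hij
      (hx.notMem_periodicPts hw) hwj
    exact sameCycle_actionThrough_hGen hi hj hn hp hq (hz.symm.trans hw)
  by_cases hmoved : ∃ z ∈ permOrbit (imageGen h0 φ i hi) x, imageGen h0 φ j hj z ≠ z
  · obtain ⟨z, hz, hzj⟩ := hmoved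
    exact ⟨z, fun w hw hwj ↦ hcycle hz hw hzj hwj⟩
  · push Not at hmoved
    exact ⟨x, fun z hz hzj ↦ absurd (hmoved z hz) hzj⟩
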